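/- Let 1 < p < ∞, p' = p/(p−1), and let ω and ν be radial weights. If the Bergman projection P_ω is bounded on L^p_ν, then the set {s ∈ [0,1) : ν(s) = 0} has measure zero with respect to ω(s)ds, and ∫₀¹ s (ω(s)/ν(s)^{1/p})^{p'} ds < ∞. -/

import Mathlib

open MeasureTheory Set Metric
open scoped ENNReal NNReal

noncomputable section

/-- `ω̂(r) = ∫_r^1 ω(s) ds`. -/
def hatw (w : ℝ → ℝ) (r : ℝ) : ℝ := ∫ s in Set.Ioo r 1, w s

/-- `ω̂₁(r) = ∫_r^1 s ω(s) ds`. -/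
def hat1 (w : ℝ → ℝ) (r : ℝ) : ℝ := ∫ s in Set.Ioo r 1, s * w s

/-- A radial weight: nonnegative, integrable on `[0,1)`, with `ω̂(r) > 0` for `0 ≤ r < 1`. -/
def IsRadialWeight (w : ℝ → ℝ) : Prop :=
  (∀ r ∈ Set.Ico (0:ℝ) 1, 0 ≤ w r) ∧ MeasureTheory.IntegrableOn w (Set.Ico (0:ℝ) 1) ∧
    ∀ r ∈ Set.Ico (0:ℝ) 1, 0 < hatw w r

/-- The odd moment `ω_{2n+1} = ∫₀¹ r^{2n+1} ω(r) dr`. -/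
def moment (w : ℝ → ℝ) (n : ℕ) : ℝ := ∫ r in Set.Ioo (0:ℝ) 1, r ^ (2 * n + 1) * w r

/-- The Bergman reproducing kernel `B_z^ω(ζ) = Σ_n (conj z · ζ)^n / (2 ω_{2n+1})`. -/
def Bker (w : ℝ → ℝ) (z ζ : ℂ) : ℂ :=
  ∑' n : ℕ, ((starRingEnd ℂ) z * ζ) ^ n / ((2 * moment w n : ℝ) : ℂ)

/-- The `L^p_ν` norm (with `dA` = area measure divided by `π`) of a complex-valued
function on the unit disc. -/
def LpC (p : ℝ) (v : ℝ → ℝ) (f : ℂ → ℂ) : ℝ≥0∞ :=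
  ((∫⁻ z in Metric.ball (0:ℂ) 1, ENNReal.ofReal (‖f z‖ ^ p * v ‖z‖)) /
    ENNReal.ofReal Real.pi) ^ (1 / p)

/-- The Bergman projection `P_ω(f)(z) = ∫_𝔻 f(ζ) conj(B_z^ω(ζ)) ω(ζ) dA(ζ)`. -/
def Pw (w : ℝ → ℝ) (f : ℂ → ℂ) (z : ℂ) : ℂ :=
  (∫ ζ in Metric.ball (0:ℂ) 1, f ζ * (starRingEnd ℂ) (Bker w z ζ) * ((w ‖ζ‖ : ℝ) : ℂ)) /
    ((Real.pi : ℝ) : ℂ)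

/-- `P_ω` is bounded on `L^p_ν`: for every `f ∈ L^p_ν` the defining integral converges
absolutely for a.e. `z ∈ 𝔻` and `‖P_ω f‖_{L^p_ν} ≤ C ‖f‖_{L^p_ν}`. -/
def PwBounded (p : ℝ) (w v : ℝ → ℝ) : Prop :=
  ∃ C > (0:ℝ), ∀ f : ℂ → ℂ, Measurable f → LpC p v f < ⊤ →
    (∀ᵐ z ∂(volume.restrict (Metric.ball (0:ℂ) 1)),
      (∫⁻ ζ in Metric.ball (0:ℂ) 1, ENNReal.ofReal (‖f ζ‖ * ‖Bker w z ζ‖ * w ‖ζ‖)) < ⊤) ∧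
    LpC p v (Pw w f) ≤ ENNReal.ofReal C * LpC p v f

/-- `σ(s) = (ω(s)/ν(s)^{1/p})^{p'}`, as an extended nonnegative real (so `σ(s) = ∞`
when `ν(s) = 0 < ω(s)`). -/
def sigmaE (p : ℝ) (w v : ℝ → ℝ) (s : ℝ) : ℝ≥0∞ :=
  (ENNReal.ofReal (w s) / ENNReal.ofReal (v s) ^ (1 / p)) ^ (p / (p - 1))

lemma polar_lint (F : ℝ → ℝ≥0∞) (hF : Measurable F) :
    ∫⁻ z in Metric.ball (0:ℂ) 1, F ‖z‖ =
      ENNReal.ofReal (2 * Real.pi) * ∫⁻ s in Set.Ioo (0:ℝ) 1, ENNReal.ofReal s * F s := by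
  rw [← lintegral_indicator measurableSet_ball, ← Complex.lintegral_comp_polarCoord_symm,
    ← lintegral_indicator measurableSet_Ioo]
  set H : ℝ → ℝ≥0∞ := (Set.Ioo (0:ℝ) 1).indicator (fun s => ENNReal.ofReal s * F s) with hH
  have hHm : Measurable H :=
    (ENNReal.measurable_ofReal.mul hF).indicator measurableSet_Ioo
  have h1 : ∫⁻ p in polarCoord.target, ENNReal.ofReal p.1 •
      (Metric.ball (0:ℂ) 1).indicator (fun z => F ‖z‖) (Complex.polarCoord.symm p)
      = ∫⁻ p in polarCoord.target, H p.1 := by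
    refine setLIntegral_congr_fun polarCoord.open_target.measurableSet ?_
    intro p hp
    have hp1 : 0 < p.1 := hp.1
    have hn : ‖Complex.polarCoord.symm p‖ = p.1 := by
      rw [Complex.norm_polarCoord_symm, abs_of_pos hp1]
    by_cases h : p.1 < 1
    · simp [hH, Set.indicator, h, hp1, abs_of_pos hp1]
    · simp [hH, Set.indicator, h, abs_of_pos hp1]
  rw [h1]
  change ∫⁻ p in (Set.Ioi (0 : ℝ) ×ˢ Set.Ioo (-Real.pi) Real.pi), H p.1 = _
  rw [Measure.volume_eq_prod, ← Measure.prod_restrict,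
    lintegral_prod (fun p : ℝ × ℝ => H p.1) (hHm.comp measurable_fst).aemeasurable]
  simp only [lintegral_const, Measure.restrict_apply MeasurableSet.univ, Set.univ_inter,
    Real.volume_Ioo]
  rw [lintegral_mul_const _ hHm, mul_comm]
  congr 1
  · congr 1; ring
  · rw [← lintegral_indicator measurableSet_Ioi]
    congr 1; ext s
    by_cases h : 0 < s <;> simp [hH, Set.indicator, h]

lemma ae_ball {P : ℝ → Prop} (h : ∀ᵐ s ∂(volume.restrict (Set.Ioo (0:ℝ) 1)), P s) :
    ∀ᵐ z ∂(volume.restrict (Metric.ball (0:ℂ) 1)), P ‖z‖ := by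
  rw [ae_iff] at h
  obtain ⟨t, ht, htm, h0⟩ := exists_measurable_superset_of_null h
  have h2 := polar_lint (t.indicator 1) (measurable_one.indicator htm)
  have h3 : ∫⁻ s in Set.Ioo (0:ℝ) 1, ENNReal.ofReal s * t.indicator 1 s = 0 := by
    refine (lintegral_eq_zero_iff
      (ENNReal.measurable_ofReal.mul (measurable_one.indicator htm))).2 ?_
    have : ∀ᵐ s ∂(volume.restrict (Set.Ioo (0:ℝ) 1)), s ∉ t := by
      rw [ae_iff]; simpa using h0
    filter_upwards [this] with s hs
    simp [hs]
  rw [h3, mul_zero] at h2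
  replace h2 := (lintegral_eq_zero_iff
    ((measurable_one.indicator htm).comp measurable_norm)).1 h2
  filter_upwards [h2] with z hz
  by_contra hc
  have : ‖z‖ ∈ t := ht hc
  simp [this] at hz

lemma moment_lower (w : ℝ → ℝ) (hw : IsRadialWeight w) (ρ : ℝ) (h0 : 0 ≤ ρ) (_h1 : ρ < 1) (n : ℕ) :
    ρ ^ (2 * n + 1) * hatw w ρ ≤ moment w n := by
  obtain ⟨hnn, hint, hpos⟩ := hw
  have hi : IntegrableOn (fun r => r ^ (2 * n + 1) * w r) (Set.Ioo (0:ℝ) 1) := by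
    have := hint.mono_set (Set.Ioo_subset_Ico_self (a := (0:ℝ)) (b := 1))
    refine Integrable.bdd_mul (c := 1) this (by fun_prop) ?_
    filter_upwards [ae_restrict_mem measurableSet_Ioo] with r hr
    rw [norm_pow, Real.norm_of_nonneg hr.1.le]
    exact pow_le_one₀ hr.1.le hr.2.le
  have hsub : Set.Ioo ρ 1 ⊆ Set.Ioo 0 1 := Set.Ioo_subset_Ioo_left h0
  unfold hatw moment
  rw [← integral_const_mul]
  calc _ ≤ ∫ r in Set.Ioo ρ 1, r ^ (2 * n + 1) * w r := by
        refine setIntegral_mono_on ?_ (hi.mono_set hsub) measurableSet_Ioo ?_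
        · exact ((hint.mono_set Set.Ioo_subset_Ico_self).mono_set hsub).const_mul _
        · intro r hr
          have := hnn r ⟨h0.trans hr.1.le, hr.2⟩
          gcongr
          exact hr.1.le
    _ ≤ _ := by
        refine setIntegral_mono_set hi ?_ (Filter.Eventually.of_forall hsub)
        filter_upwards [ae_restrict_mem measurableSet_Ioo] with r hr
        exact mul_nonneg (pow_nonneg hr.1.le _) (hnn r ⟨hr.1.le, hr.2⟩)

lemma moment_pos (w : ℝ → ℝ) (hw : IsRadialWeight w) (n : ℕ) : 0 < moment w n := by
  refine lt_of_lt_of_le ?_ (moment_lower w hw (1/2) (by norm_num) (by norm_num) n)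
  have := hw.2.2 (1/2) (by norm_num)
  positivity

lemma summable_ker (w : ℝ → ℝ) (hw : IsRadialWeight w) (r : ℝ) (h0 : 0 ≤ r) (h1 : r < 1) :
    Summable (fun n : ℕ => r ^ n / (2 * moment w n)) := by
  obtain ⟨ρ, hρ0, hρ1, hr⟩ : ∃ ρ : ℝ, 0 < ρ ∧ ρ < 1 ∧ r < ρ ^ 2 := by
    refine ⟨Real.sqrt ((1 + r)/2), Real.sqrt_pos.2 (by linarith), ?_, ?_⟩
    · rw [Real.sqrt_lt' one_pos]; linarith
    · rw [Real.sq_sqrt (by linarith)]; linarith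
  have hh := hw.2.2 ρ ⟨hρ0.le, hρ1⟩
  have hg : Summable (fun n : ℕ => (1 / (2 * ρ * hatw w ρ)) * (r / ρ ^ 2) ^ n) := by
    refine (summable_geometric_of_lt_one (by positivity) ?_).mul_left _
    rw [div_lt_one (by positivity)]; exact hr
  refine Summable.of_nonneg_of_le ?_ ?_ hg
  · intro n
    have := moment_pos w hw n
    positivity
  · intro n
    have h := moment_lower w hw ρ hρ0.le hρ1 n
    calc r ^ n / (2 * moment w n) ≤ r ^ n / (2 * (ρ ^ (2 * n + 1) * hatw w ρ)) := by gcongr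
      _ = _ := by
        rw [div_pow, ← pow_mul, pow_succ]; field_simp

lemma rot_int (h : ℝ → ℝ) (n : ℕ) (hn : n ≠ 0) :
    ∫ ζ in Metric.ball (0:ℂ) 1, (h ‖ζ‖ : ℂ) * ((starRingEnd ℂ) ζ) ^ n = 0 := by
  set a : Circle := Circle.exp (Real.pi / n) with ha
  have han : (a : ℂ) ^ n = -1 := by
    rw [ha, Circle.coe_exp, ← Complex.exp_nat_mul]
    have : (n : ℂ) ≠ 0 := by exact_mod_cast hn
    rw [← Complex.exp_pi_mul_I]; congr 1; push_cast; field_simp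
  have key := (LinearIsometryEquiv.measurePreserving (rotation a)).setIntegral_preimage_emb
    (rotation a).toHomeomorph.measurableEmbedding
    (fun ζ => (h ‖ζ‖ : ℂ) * ((starRingEnd ℂ) ζ) ^ n) (Metric.ball (0:ℂ) 1)
  have hpre : (rotation a) ⁻¹' (Metric.ball (0:ℂ) 1) = Metric.ball (0:ℂ) 1 := by
    ext z; simp only [Set.mem_preimage, mem_ball_zero_iff, LinearIsometryEquiv.norm_map]
  have hcn : ((starRingEnd ℂ) (a:ℂ)) ^ n = -1 := by rw [← map_pow, han]; simp
  rw [hpre] at key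
  have h2 : ∀ z : ℂ, (h ‖rotation a z‖ : ℂ) * ((starRingEnd ℂ) (rotation a z)) ^ n
      = - ((h ‖z‖ : ℂ) * ((starRingEnd ℂ) z) ^ n) := by
    intro z
    rw [LinearIsometryEquiv.norm_map, rotation_apply, map_mul, mul_pow, hcn]; ring
  simp only [h2] at key
  rw [integral_neg] at key
  linear_combination (-1/2 : ℂ) * key

lemma intW (w : ℝ → ℝ) (hw : IsRadialWeight w) (hm : Measurable w) (hn : ∀ s, 0 ≤ w s) :
    Integrable (fun z : ℂ => w ‖z‖) (volume.restrict (Metric.ball (0:ℂ) 1)) := by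
  refine ⟨(hm.comp measurable_norm).aestronglyMeasurable, ?_⟩
  rw [hasFiniteIntegral_iff_ofReal (Filter.Eventually.of_forall fun z => hn _)]
  rw [polar_lint (fun s => ENNReal.ofReal (w s)) (by fun_prop)]
  refine ENNReal.mul_lt_top ENNReal.ofReal_lt_top ?_
  have hi := (hw.2.1.mono_set (Set.Ioo_subset_Ico_self (a := (0:ℝ)) (b := 1))).2
  rw [hasFiniteIntegral_iff_ofReal (Filter.Eventually.of_forall fun z => hn _)] at hi
  refine lt_of_le_of_lt (setLIntegral_mono' measurableSet_Ioo ?_) hi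
  intro s hs
  have : ENNReal.ofReal s ≤ 1 := ENNReal.ofReal_le_one.2 hs.2.le
  calc _ ≤ 1 * ENNReal.ofReal (w s) := by gcongr
    _ = _ := one_mul _

lemma Pw_radial (w : ℝ → ℝ) (hw : IsRadialWeight w) (hm : Measurable w) (hn : ∀ s, 0 ≤ w s)
    (g : ℝ → ℝ) (hg : Measurable g) (hg0 : ∀ s, 0 ≤ g s) (M : ℝ) (hM : ∀ s, g s ≤ M)
    (z : ℂ) (hz : z ∈ Metric.ball (0:ℂ) 1) :
    Pw w (fun ζ => (g ‖ζ‖ : ℂ)) z =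
      (((∫ ζ in Metric.ball (0:ℂ) 1, g ‖ζ‖ * w ‖ζ‖) / (2 * moment w 0) / Real.pi : ℝ) : ℂ) := by
  have hz1 : ‖z‖ < 1 := by simpa using hz
  set μ := volume.restrict (Metric.ball (0:ℂ) 1) with hμ
  have hgw : Integrable (fun ζ : ℂ => g ‖ζ‖ * w ‖ζ‖) μ := by
    refine (intW w hw hm hn).bdd_mul (c := M) (hg.comp measurable_norm).aestronglyMeasurable ?_
    refine Filter.Eventually.of_forall fun ζ => ?_
    rw [Real.norm_of_nonneg (hg0 _)]; exact hM _
  set T : ℕ → ℂ → ℂ := fun n ζ => (z ^ n / ((2 * moment w n : ℝ) : ℂ)) *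
    (((g ‖ζ‖ * w ‖ζ‖ : ℝ) : ℂ) * ((starRingEnd ℂ) ζ) ^ n) with hT
  have hs := summable_ker w hw ‖z‖ (norm_nonneg _) hz1
  have hTb : ∀ n, ∀ᵐ ζ ∂μ, ‖T n ζ‖ ≤ (‖z‖ ^ n / (2 * moment w n)) * (g ‖ζ‖ * w ‖ζ‖) := by
    intro n
    filter_upwards [ae_restrict_mem measurableSet_ball] with ζ hζ
    have hζ1 : ‖ζ‖ < 1 := by simpa using hζ
    have hmp := moment_pos w hw n
    have hgn : 0 ≤ g ‖ζ‖ * w ‖ζ‖ := mul_nonneg (hg0 _) (hn _)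
    simp only [hT, norm_mul, norm_div, norm_pow, Complex.norm_real, RCLike.norm_conj]
    rw [Real.norm_of_nonneg (hg0 _), Real.norm_of_nonneg (hn _), Real.norm_of_nonneg hmp.le,
      Real.norm_of_nonneg zero_le_two]
    calc _ ≤ ‖z‖ ^ n / (2 * moment w n) * (g ‖ζ‖ * w ‖ζ‖ * 1) := by
          gcongr
          exact pow_le_one₀ (norm_nonneg _) hζ1.le
      _ = _ := by rw [mul_one]
  have hTi : ∀ n, Integrable (T n) μ := by
    intro n
    refine (hgw.const_mul (‖z‖ ^ n / (2 * moment w n))).mono' ?_ (hTb n)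
    refine Measurable.aestronglyMeasurable ?_
    have hc : Measurable (starRingEnd ℂ) := Complex.continuous_conj.measurable
    have h1 : Measurable fun ζ : ℂ => ((g ‖ζ‖ * w ‖ζ‖ : ℝ) : ℂ) := by fun_prop
    exact (h1.mul (hc.pow_const n)).const_mul _
  have hsum : Summable fun n => ∫ ζ, ‖T n ζ‖ ∂μ := by
    refine Summable.of_nonneg_of_le (fun n => integral_nonneg fun _ => norm_nonneg _) ?_
      (hs.mul_right (∫ ζ, g ‖ζ‖ * w ‖ζ‖ ∂μ))
    intro n
    rw [← integral_const_mul]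
    exact integral_mono_ae (hTi n).norm (hgw.const_mul _) (hTb n)
  have hHS := hasSum_integral_of_summable_integral_norm hTi hsum
  have hzero : ∀ n, n ≠ 0 → ∫ ζ, T n ζ ∂μ = 0 := by
    intro n hn0
    simp only [hT]
    rw [integral_const_mul, hμ, rot_int (fun s => g s * w s) n hn0, mul_zero]
  have heq := hHS.unique (hasSum_single 0 hzero)
  have hfun : ∀ᵐ ζ ∂μ, (g ‖ζ‖ : ℂ) * (starRingEnd ℂ) (Bker w z ζ) * ((w ‖ζ‖ : ℝ) : ℂ)
      = ∑' n, T n ζ := by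
    refine Filter.Eventually.of_forall fun ζ => ?_
    unfold Bker
    rw [Complex.conj_tsum, mul_right_comm, ← tsum_mul_left]
    congr 1; ext n
    simp only [hT, map_div₀, map_pow, map_mul, Complex.conj_conj, Complex.conj_ofReal, mul_pow]
    push_cast; ring
  unfold Pw
  rw [integral_congr_ae hfun, heq]
  simp only [hT, pow_zero, mul_one]
  rw [integral_const_mul, integral_complex_ofReal]
  push_cast; ring

lemma N_ne_zero (v : ℝ → ℝ) (hv : IsRadialWeight v) (hm : Measurable v) (hn : ∀ s, 0 ≤ v s) :
    ∫⁻ z in Metric.ball (0:ℂ) 1, ENNReal.ofReal (v ‖z‖) ≠ 0 := by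
  intro h
  rw [polar_lint (fun s => ENNReal.ofReal (v s)) (by fun_prop)] at h
  have h2 : ENNReal.ofReal (2 * Real.pi) ≠ 0 := by
    rw [Ne, ENNReal.ofReal_eq_zero, not_le]; positivity
  replace h := (mul_eq_zero.1 h).resolve_left h2
  rw [lintegral_eq_zero_iff (by fun_prop)] at h
  have h3 := hv.2.2 0 (by simp)
  have h4 : hatw v 0 = 0 := by
    unfold hatw
    rw [integral_eq_zero_of_ae]
    filter_upwards [h, ae_restrict_mem measurableSet_Ioo] with s hs hs1
    have h5 : ENNReal.ofReal s ≠ 0 := by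
      rw [Ne, ENNReal.ofReal_eq_zero, not_le]; exact hs1.1
    have h6 := (mul_eq_zero.1 hs).resolve_left h5
    exact le_antisymm (ENNReal.ofReal_eq_zero.1 h6) (hn s)
  linarith

lemma key_ineq (p : ℝ) (hp : 1 < p) (w v : ℝ → ℝ)
    (hw : IsRadialWeight w) (hv : IsRadialWeight v) (hwm : Measurable w) (hvm : Measurable v)
    (hw0 : ∀ s, 0 ≤ w s) (hv0 : ∀ s, 0 ≤ v s) (hP : PwBounded p w v) :
    ∃ K : ℝ≥0∞, K ≠ ⊤ ∧ ∀ g : ℝ → ℝ, Measurable g → (∀ s, 0 ≤ g s) → ∀ M : ℝ, (∀ s, g s ≤ M) →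
      (∫⁻ z in Metric.ball (0:ℂ) 1, ENNReal.ofReal (g ‖z‖ ^ p * v ‖z‖)) ≠ ⊤ →
      (∫⁻ z in Metric.ball (0:ℂ) 1, ENNReal.ofReal (g ‖z‖ * w ‖z‖)) ≤
        K * (∫⁻ z in Metric.ball (0:ℂ) 1, ENNReal.ofReal (g ‖z‖ ^ p * v ‖z‖)) ^ (1 / p) := by
  obtain ⟨C, hC, hP⟩ := hP
  have hp0 : 0 < p := by linarith
  set N := ∫⁻ z in Metric.ball (0:ℂ) 1, ENNReal.ofReal (v ‖z‖) with hN
  have hN0 : N ≠ 0 := N_ne_zero v hv hvm hv0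
  have hNt : N ≠ ⊤ := by
    have := (intW v hv hvm hv0).2
    rw [hasFiniteIntegral_iff_ofReal (Filter.Eventually.of_forall fun z => hv0 _)] at this
    exact this.ne
  have hpi0 : ENNReal.ofReal Real.pi ≠ 0 := by
    rw [Ne, ENNReal.ofReal_eq_zero, not_le]; exact Real.pi_pos
  set D := (N / ENNReal.ofReal Real.pi) ^ (1 / p) with hD
  have hD0 : D ≠ 0 := by
    have : N / ENNReal.ofReal Real.pi ≠ 0 := ENNReal.div_ne_zero.2 ⟨hN0, ENNReal.ofReal_ne_top⟩
    exact (ENNReal.rpow_pos (pos_iff_ne_zero.2 this) (ENNReal.div_ne_top hNt hpi0)).ne'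
  have hDt : D ≠ ⊤ :=
    ENNReal.rpow_ne_top_of_nonneg (by positivity) (ENNReal.div_ne_top hNt hpi0)
  have hm0 := moment_pos w hw 0
  set c : ℝ := 2 * moment w 0 * Real.pi with hc
  have hcpos : 0 < c := by have := Real.pi_pos; positivity
  set Q : ℝ≥0∞ := ((ENNReal.ofReal Real.pi)⁻¹) ^ (1 / p) with hQ
  have hQt : Q ≠ ⊤ := ENNReal.rpow_ne_top_of_nonneg (by positivity) (ENNReal.inv_ne_top.2 hpi0)
  refine ⟨ENNReal.ofReal c * (D⁻¹ * (ENNReal.ofReal C * Q)), ?_, ?_⟩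
  · exact ENNReal.mul_ne_top ENNReal.ofReal_ne_top (ENNReal.mul_ne_top (ENNReal.inv_ne_top.2 hD0)
      (ENNReal.mul_ne_top ENNReal.ofReal_ne_top hQt))
  intro g hg hg0 M hM hX
  set X := ∫⁻ z in Metric.ball (0:ℂ) 1, ENNReal.ofReal (g ‖z‖ ^ p * v ‖z‖) with hXd
  set f : ℂ → ℂ := fun ζ => (g ‖ζ‖ : ℂ) with hf
  have hfm : Measurable f := by fun_prop
  have hLf : LpC p v f = (X / ENNReal.ofReal Real.pi) ^ (1 / p) := by
    unfold LpC
    rw [hXd]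
    congr 3; ext z
    simp only [hf, Complex.norm_real, Real.norm_of_nonneg (hg0 _)]
  have hLt : LpC p v f < ⊤ := by
    rw [hLf]
    exact (ENNReal.rpow_ne_top_of_nonneg (by positivity) (ENNReal.div_ne_top hX hpi0)).lt_top
  have hB := (hP f hfm hLt).2
  set J := ∫ ζ in Metric.ball (0:ℂ) 1, g ‖ζ‖ * w ‖ζ‖ with hJ
  have hJ0 : 0 ≤ J := integral_nonneg fun ζ => mul_nonneg (hg0 _) (hw0 _)
  have hk0 : 0 ≤ J / c := by positivity
  have hLP : LpC p v (Pw w f) = ENNReal.ofReal (J / c) * D := by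
    unfold LpC
    have : ∫⁻ z in Metric.ball (0:ℂ) 1, ENNReal.ofReal (‖Pw w f z‖ ^ p * v ‖z‖)
        = ENNReal.ofReal ((J / c) ^ p) * N := by
      rw [hN, ← lintegral_const_mul _ (by fun_prop)]
      refine setLIntegral_congr_fun measurableSet_ball fun z hz => ?_
      rw [Pw_radial w hw hwm hw0 g hg hg0 M hM z hz, Complex.norm_real,
        ← ENNReal.ofReal_mul (by positivity), div_div, ← hc, ← hJ, Real.norm_of_nonneg hk0]
    rw [this, mul_div_assoc, ENNReal.mul_rpow_of_nonneg _ _ (by positivity),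
      ENNReal.ofReal_rpow_of_nonneg (by positivity) (by positivity), ← Real.rpow_mul hk0,
      mul_one_div_cancel hp0.ne', Real.rpow_one]
  have hgw : Integrable (fun ζ : ℂ => g ‖ζ‖ * w ‖ζ‖) (volume.restrict (Metric.ball (0:ℂ) 1)) := by
    refine (intW w hw hwm hw0).bdd_mul (c := M) (hg.comp measurable_norm).aestronglyMeasurable ?_
    refine Filter.Eventually.of_forall fun ζ => ?_
    rw [Real.norm_of_nonneg (hg0 _)]; exact hM _
  rw [← ofReal_integral_eq_lintegral_ofReal hgw
    (Filter.Eventually.of_forall fun ζ => mul_nonneg (hg0 _) (hw0 _)), ← hJ]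
  rw [hLP, hLf, div_eq_mul_inv X, ENNReal.mul_rpow_of_nonneg _ _ (by positivity)] at hB
  have h1 : ENNReal.ofReal J = ENNReal.ofReal c * ENNReal.ofReal (J / c) := by
    rw [← ENNReal.ofReal_mul hcpos.le, mul_div_cancel₀ _ hcpos.ne']
  have h2 : ENNReal.ofReal (J / c) ≤ D⁻¹ * (ENNReal.ofReal C * (X ^ (1 / p) * Q)) := by
    calc ENNReal.ofReal (J / c) = D⁻¹ * (ENNReal.ofReal (J / c) * D) := by
          rw [mul_comm _ D, ← mul_assoc, ENNReal.inv_mul_cancel hD0 hDt, one_mul]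
      _ ≤ _ := by gcongr
  rw [h1]
  calc _ ≤ ENNReal.ofReal c * (D⁻¹ * (ENNReal.ofReal C * (X ^ (1 / p) * Q))) := by gcongr
    _ = _ := by ring

lemma real_id (p : ℝ) (hp : 1 < p) (a b : ℝ) (ha : 0 ≤ a) (hb : 0 < b) :
    ((a / b) ^ (1 / (p - 1))) ^ p * b = (a / b) ^ (1 / (p - 1)) * a := by
  have h1 : 0 ≤ a / b := by positivity
  have hp1 : 0 < p - 1 := by linarith
  rw [← Real.rpow_mul h1]
  have : 1 / (p - 1) * p = 1 / (p - 1) + 1 := by field_simp; ring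
  rw [this, Real.rpow_add_one' h1 (by positivity), mul_assoc, div_mul_cancel₀ _ hb.ne']

lemma sigma_id (p : ℝ) (hp : 1 < p) (w v : ℝ → ℝ) (s : ℝ) (ha : 0 ≤ w s) (hb : 0 < v s) :
    sigmaE p w v s = ENNReal.ofReal ((w s / v s) ^ (1 / (p - 1)) * w s) := by
  have hp1 : 0 < p - 1 := by linarith
  have h1 : 0 ≤ w s / v s := by positivity
  unfold sigmaE
  rw [ENNReal.ofReal_rpow_of_pos hb, ← ENNReal.ofReal_div_of_pos (by positivity),
    ENNReal.ofReal_rpow_of_nonneg (by positivity) (by positivity)]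
  congr 1
  rw [Real.div_rpow ha (by positivity), ← Real.rpow_mul hb.le, Real.div_rpow ha hb.le]
  have e1 : 1 / p * (p / (p - 1)) = 1 / (p - 1) := by field_simp
  have e2 : p / (p - 1) = 1 / (p - 1) + 1 := by field_simp; ring
  rw [e1, e2, Real.rpow_add_one' ha (by positivity)]
  ring

lemma absorb (p : ℝ) (hp : 1 < p) (K I : ℝ≥0∞) (hI : I ≠ ⊤)
    (h : I ≤ K * I ^ (1 / p)) : I ≤ K ^ (p / (p - 1)) := by
  have hp1 : 0 < p - 1 := by linarith
  by_cases h0 : I = 0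
  · simp [h0]
  have h1 : I ^ ((p - 1) / p) ≤ K := by
    have e : (p - 1) / p = 1 - 1 / p := by field_simp
    rw [e, ENNReal.rpow_sub _ _ h0 hI, ENNReal.rpow_one]
    exact ENNReal.div_le_of_le_mul h
  calc I = (I ^ ((p - 1) / p)) ^ (p / (p - 1)) := by
        rw [← ENNReal.rpow_mul]
        have : (p - 1) / p * (p / (p - 1)) = 1 := by field_simp
        rw [this, ENNReal.rpow_one]
    _ ≤ _ := by gcongr

lemma main_meas (p : ℝ) (hp : 1 < p) (w v : ℝ → ℝ)
    (hw : IsRadialWeight w) (hv : IsRadialWeight v) (hwm : Measurable w) (hvm : Measurable v)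
    (hw0 : ∀ s, 0 ≤ w s) (hv0 : ∀ s, 0 ≤ v s) (hP : PwBounded p w v) :
    (∀ᵐ s ∂(volume.restrict (Set.Ioo (0:ℝ) 1)), v s = 0 → w s = 0) ∧
      (∫⁻ s in Set.Ioo (0:ℝ) 1, ENNReal.ofReal s * sigmaE p w v s) < ⊤ := by
  obtain ⟨K, hK, hkey⟩ := key_ineq p hp w v hw hv hwm hvm hw0 hv0 hP
  have hp0 : 0 < p := by linarith
  have hp1 : 0 < p - 1 := by linarith
  have h2pi : ENNReal.ofReal (2 * Real.pi) ≠ 0 := by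
    rw [Ne, ENNReal.ofReal_eq_zero, not_le]; positivity
  have part1 : ∀ᵐ s ∂(volume.restrict (Set.Ioo (0:ℝ) 1)), v s = 0 → w s = 0 := by
    set g : ℝ → ℝ := {s | v s = 0}.indicator (fun _ => 1) with hg
    have hgm : Measurable g :=
      measurable_const.indicator (hvm (measurableSet_singleton 0))
    have hz : ∀ s, g s ^ p * v s = 0 := by
      intro s
      by_cases h : v s = 0
      · simp [h]
      · simp [hg, h, Real.zero_rpow hp0.ne']
    have hX : ∫⁻ z in Metric.ball (0:ℂ) 1, ENNReal.ofReal (g ‖z‖ ^ p * v ‖z‖) = 0 := by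
      simp [hz]
    have h := hkey g hgm (fun s => Set.indicator_nonneg (fun _ _ => zero_le_one) s) 1
      (fun s => Set.indicator_le_self' (fun _ _ => zero_le_one) s) (by rw [hX]; simp)
    rw [hX, ENNReal.zero_rpow_of_pos (by positivity), mul_zero, nonpos_iff_eq_zero,
      polar_lint (fun s => ENNReal.ofReal (g s * w s)) (by fun_prop)] at h
    replace h := (mul_eq_zero.1 h).resolve_left h2pi
    rw [lintegral_eq_zero_iff (by fun_prop)] at h
    filter_upwards [h, ae_restrict_mem measurableSet_Ioo] with s hs hs1 hvs
    have h5 : ENNReal.ofReal s ≠ 0 := by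
      rw [Ne, ENNReal.ofReal_eq_zero, not_le]; exact hs1.1
    have h6 := (mul_eq_zero.1 hs).resolve_left h5
    have h7 : g s = 1 := by simp [hg, hvs]
    rw [h7, one_mul] at h6
    exact le_antisymm (ENNReal.ofReal_eq_zero.1 h6) (hw0 s)
  refine ⟨part1, ?_⟩
  set A : ℕ → Set ℝ := fun n => {s | w s ≤ n} ∩ {s | 1 / ((n:ℝ) + 1) ≤ v s} with hA
  have hAm : ∀ n, MeasurableSet (A n) := fun n =>
    (measurableSet_le hwm measurable_const).inter (measurableSet_le measurable_const hvm)
  set G : ℝ → ℝ := fun s => (w s / v s) ^ (1 / (p - 1)) with hG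
  have hGm : Measurable G := (hwm.div hvm).pow_const _
  have hG0 : ∀ s, 0 ≤ G s := fun s => Real.rpow_nonneg (div_nonneg (hw0 s) (hv0 s)) _
  set g : ℕ → ℝ → ℝ := fun n => (A n).indicator G with hg
  have hgm : ∀ n, Measurable (g n) := fun n => hGm.indicator (hAm n)
  have hg0 : ∀ n s, 0 ≤ g n s := fun n s => Set.indicator_nonneg (fun s _ => hG0 s) s
  have hgb : ∀ n s, g n s ≤ ((n:ℝ) * (n + 1)) ^ (1 / (p - 1)) := by
    intro n s
    by_cases hs : s ∈ A n
    · rw [hg]; simp only [Set.indicator_of_mem hs]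
      refine Real.rpow_le_rpow (div_nonneg (hw0 s) (hv0 s)) ?_ (by positivity)
      have h1 : w s ≤ n := hs.1
      have h2 : 1 / ((n:ℝ) + 1) ≤ v s := hs.2
      calc w s / v s ≤ n / (1 / ((n:ℝ) + 1)) := by gcongr
        _ = _ := by field_simp
    · rw [hg]; simp only [Set.indicator_of_notMem hs]
      positivity
  have hid : ∀ n s, g n s ^ p * v s = g n s * w s := by
    intro n s
    by_cases hs : s ∈ A n
    · have h2 : 0 < v s := lt_of_lt_of_le (by positivity) hs.2
      rw [hg]; simp only [Set.indicator_of_mem hs]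
      exact real_id p hp _ _ (hw0 s) h2
    · rw [hg]; simp only [Set.indicator_of_notMem hs]
      rw [Real.zero_rpow hp0.ne']; ring
  have hI : ∀ n, ∫⁻ z in Metric.ball (0:ℂ) 1, ENNReal.ofReal (g n ‖z‖ * w ‖z‖)
      ≤ K ^ (p / (p - 1)) := by
    intro n
    have hfin : ∫⁻ z in Metric.ball (0:ℂ) 1, ENNReal.ofReal (g n ‖z‖ * w ‖z‖) ≠ ⊤ := by
      have hgw : Integrable (fun ζ : ℂ => g n ‖ζ‖ * w ‖ζ‖)
          (volume.restrict (Metric.ball (0:ℂ) 1)) := by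
        refine (intW w hw hwm hw0).bdd_mul (c := ((n:ℝ) * (n + 1)) ^ (1 / (p - 1)))
          ((hgm n).comp measurable_norm).aestronglyMeasurable ?_
        refine Filter.Eventually.of_forall fun ζ => ?_
        rw [Real.norm_of_nonneg (hg0 _ _)]; exact hgb _ _
      have := hgw.2
      rw [hasFiniteIntegral_iff_ofReal
        (Filter.Eventually.of_forall fun z => mul_nonneg (hg0 _ _) (hw0 _))] at this
      exact this.ne
    have h := hkey (g n) (hgm n) (hg0 n) _ (hgb n) (by simpa only [hid] using hfin)
    simp only [hid] at h
    exact absorb p hp K _ hfin h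
  have hmono : Monotone fun n s => ENNReal.ofReal s * ENNReal.ofReal (g n s * w s) := by
    intro m n hmn s
    have hmn' : (m:ℝ) ≤ n := by exact_mod_cast hmn
    have hsub : A m ⊆ A n := by
      intro s hs
      have h2 : 1 / ((m:ℝ) + 1) ≤ v s := hs.2
      refine ⟨le_trans hs.1 hmn', ?_⟩
      change 1 / ((n:ℝ) + 1) ≤ v s
      refine le_trans ?_ h2
      gcongr
    have : g m s ≤ g n s := Set.indicator_le_indicator_of_subset hsub hG0 s
    have := hw0 s
    dsimp only
    gcongr
  have hle : ∀ᵐ s ∂(volume.restrict (Set.Ioo (0:ℝ) 1)), ENNReal.ofReal s * sigmaE p w v s ≤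
      ⨆ n, ENNReal.ofReal s * ENNReal.ofReal (g n s * w s) := by
    filter_upwards [part1] with s hs
    rcases (hv0 s).eq_or_lt with h | h
    · have : sigmaE p w v s = 0 := by
        unfold sigmaE
        rw [hs h.symm, ENNReal.ofReal_zero, ENNReal.zero_div,
          ENNReal.zero_rpow_of_pos (by positivity)]
      rw [this, mul_zero]; exact zero_le
    · obtain ⟨n1, hn1⟩ := exists_nat_ge (w s)
      obtain ⟨n2, hn2⟩ := exists_nat_one_div_lt h
      have hmem : s ∈ A (max n1 n2) := by
        refine ⟨hn1.trans (by exact_mod_cast le_max_left _ _), le_trans ?_ hn2.le⟩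
        have : (n2:ℝ) ≤ ((max n1 n2 : ℕ) : ℝ) := by exact_mod_cast le_max_right _ _
        gcongr
      refine le_trans (le_of_eq ?_)
        (le_iSup (fun n => ENNReal.ofReal s * ENNReal.ofReal (g n s * w s)) (max n1 n2))
      simp only [hg, Set.indicator_of_mem hmem]
      rw [sigma_id p hp w v s (hw0 s) h]
  refine lt_of_le_of_lt (lintegral_mono_ae hle) ?_
  rw [lintegral_iSup (fun n => by have := hgm n; fun_prop) hmono]
  have hb : ∀ n, ∫⁻ s in Set.Ioo (0:ℝ) 1, ENNReal.ofReal s * ENNReal.ofReal (g n s * w s) ≤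
      (ENNReal.ofReal (2 * Real.pi))⁻¹ * K ^ (p / (p - 1)) := by
    intro n
    have h := hI n
    rw [polar_lint (fun s => ENNReal.ofReal (g n s * w s)) (by have := hgm n; fun_prop)] at h
    calc _ = (ENNReal.ofReal (2 * Real.pi))⁻¹ * (ENNReal.ofReal (2 * Real.pi) *
          ∫⁻ s in Set.Ioo (0:ℝ) 1, ENNReal.ofReal s * ENNReal.ofReal (g n s * w s)) := by
          rw [← mul_assoc, ENNReal.inv_mul_cancel h2pi ENNReal.ofReal_ne_top, one_mul]
      _ ≤ _ := by gcongr
  refine lt_of_le_of_lt (iSup_le hb) ?_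
  exact ENNReal.mul_lt_top (ENNReal.inv_ne_top.2 h2pi).lt_top
    (ENNReal.rpow_ne_top_of_nonneg (by positivity) hK).lt_top

lemma exists_version (w : ℝ → ℝ) (hw : IsRadialWeight w) :
    ∃ W : ℝ → ℝ, Measurable W ∧ (∀ s, 0 ≤ W s) ∧ IsRadialWeight W ∧
      ∀ᵐ s ∂(volume.restrict (Set.Ioo (0:ℝ) 1)), w s = W s := by
  have hi := hw.2.1.mono_set (Set.Ioo_subset_Ico_self (a := (0:ℝ)) (b := 1))
  have ham := hi.1.aemeasurable
  have hae : ∀ᵐ s ∂(volume.restrict (Set.Ioo (0:ℝ) 1)), w s = max (ham.mk w s) 0 := by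
    filter_upwards [ham.ae_eq_mk, ae_restrict_mem measurableSet_Ioo] with s hs hs1
    rw [← hs, max_eq_left (hw.1 s ⟨hs1.1.le, hs1.2⟩)]
  refine ⟨fun s => max (ham.mk w s) 0, ham.measurable_mk.max measurable_const,
    fun s => le_max_right _ _, ⟨fun r _ => le_max_right _ _, ?_, ?_⟩, hae⟩
  · rw [integrableOn_Ico_iff_integrableOn_Ioo]
    exact hi.congr hae
  · intro r hr
    have h := hw.2.2 r hr
    unfold hatw at h ⊢
    rwa [integral_congr_ae (ae_restrict_of_ae_restrict_of_subset
      (Set.Ioo_subset_Ioo_left hr.1) hae)] at h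

lemma bounded_congr (p : ℝ) (w v W V : ℝ → ℝ)
    (hw : ∀ᵐ s ∂(volume.restrict (Set.Ioo (0:ℝ) 1)), w s = W s)
    (hv : ∀ᵐ s ∂(volume.restrict (Set.Ioo (0:ℝ) 1)), v s = V s)
    (hP : PwBounded p w v) : PwBounded p W V := by
  have hB : Bker w = Bker W := by
    have : moment w = moment W := by
      ext n
      unfold moment
      refine integral_congr_ae ?_
      filter_upwards [hw] with s hs
      rw [hs]
    unfold Bker; rw [this]
  have hPw : Pw w = Pw W := by
    ext f z
    unfold Pw
    rw [hB]
    congr 1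
    refine integral_congr_ae ?_
    filter_upwards [ae_ball hw] with z hz
    rw [hz]
  have hL : LpC p v = LpC p V := by
    ext f
    unfold LpC
    congr 2
    refine lintegral_congr_ae ?_
    filter_upwards [ae_ball hv] with z hz
    rw [hz]
  obtain ⟨C, hC, h⟩ := hP
  refine ⟨C, hC, fun f hf hfL => ?_⟩
  rw [← hL] at hfL ⊢
  rw [← hPw, ← hB]
  obtain ⟨h1, h2⟩ := h f hf hfL
  refine ⟨?_, h2⟩
  filter_upwards [h1] with z hz
  refine lt_of_eq_of_lt ?_ hz
  refine lintegral_congr_ae ?_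
  filter_upwards [ae_ball hw] with z hz
  rw [hz]

/-- Let `1 < p < ∞` and let `ω`, `ν` be radial weights. If `P_ω` is bounded
on `L^p_ν`, then `{s ∈ [0,1) : ν(s) = 0}` has measure zero with respect to `ω(s) ds`, and
`∫₀¹ s (ω(s)/ν(s)^{1/p})^{p'} ds < ∞`. -/
theorem sigma_integrable_of_bounded (p : ℝ) (hp : 1 < p) (w v : ℝ → ℝ)
    (hw : IsRadialWeight w) (hv : IsRadialWeight v)
    (hP : PwBounded p w v) :
    (∫⁻ s in {s : ℝ | s ∈ Set.Ico (0:ℝ) 1 ∧ v s = 0}, ENNReal.ofReal (w s)) = 0 ∧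
      (∫⁻ s in Set.Ioo (0:ℝ) 1, ENNReal.ofReal s * sigmaE p w v s) < ⊤ := by
  obtain ⟨W, hWm, hW0, hWr, hwW⟩ := exists_version w hw
  obtain ⟨V, hVm, hV0, hVr, hvV⟩ := exists_version v hv
  obtain ⟨h1, h2⟩ := main_meas p hp W V hWr hVr hWm hVm hW0 hV0
    (bounded_congr p w v W V hwW hvV hP)
  constructor
  · refine le_antisymm ?_ zero_le
    have hz : ∀ᵐ s ∂(volume.restrict (Set.Ioo (0:ℝ) 1)),
        {s : ℝ | v s = 0}.indicator (fun s => ENNReal.ofReal (w s)) s = 0 := by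
      filter_upwards [h1, hwW, hvV] with s a b c
      by_cases h : v s = 0
      · simp [h, b, a (c ▸ h)]
      · simp [h]
    have hz2 : ∀ᵐ s ∂(volume.restrict (Set.Ico (0:ℝ) 1)), v s = 0 → ENNReal.ofReal (w s) = 0 := by
      rw [← restrict_Ioo_eq_restrict_Ico]
      filter_upwards [hz] with s hs h
      simpa [h] using hs
    have hz3 : ∀ᵐ s ∂(volume.restrict {s : ℝ | s ∈ Set.Ico (0:ℝ) 1 ∧ v s = 0}),
        ENNReal.ofReal (w s) = 0 := by
      have hnm : NullMeasurableSet {s : ℝ | s ∈ Set.Ico (0:ℝ) 1 ∧ v s = 0} := by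
        have hVn : MeasurableSet {s : ℝ | s ∈ Set.Ico (0:ℝ) 1 ∧ V s = 0} :=
          measurableSet_Ico.inter (hVm (measurableSet_singleton 0))
        refine hVn.nullMeasurableSet.congr ?_
        have hvV' : ∀ᵐ s ∂(volume.restrict (Set.Ico (0:ℝ) 1)), v s = V s := by
          rw [← restrict_Ioo_eq_restrict_Ico]; exact hvV
        rw [ae_restrict_iff' measurableSet_Ico] at hvV'
        filter_upwards [hvV'] with s hs
        refine propext ⟨fun h => ⟨h.1, (hs h.1).trans h.2⟩, fun h => ⟨h.1, (hs h.1).symm.trans h.2⟩⟩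
      rw [ae_restrict_iff'₀ hnm]
      rw [ae_restrict_iff' measurableSet_Ico] at hz2
      filter_upwards [hz2] with s hs h
      exact hs h.1 h.2
    rw [lintegral_congr_ae hz3, lintegral_zero]
  · refine lt_of_eq_of_lt (lintegral_congr_ae ?_) h2
    filter_upwards [hwW, hvV] with s a b
    unfold sigmaE
    rw [a, b]

end
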